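/- arXiv:2410.10170 — 11 statements merged into one kernel-verified Lean document; each statement's English description precedes it below -/
import Mathlib

section
/- For any graph G with no isolated vertices, the total domination number satisfies γ_t(G) ≤ i_0(G) + 1, where i_0(G) is the isolate number of G. -/
variable {V : Type*} [Fintype V] [DecidableEq V]

/-- `S` is a total dominating set of `G`: every vertex of `G` has a neighbor in `S`. -/
def IsTotalDomSet (G : SimpleGraph V) (S : Finset V) : Prop :=
  ∀ v : V, ∃ u ∈ S, G.Adj u v

/-- The total domination number: minimum cardinality of a total dominating set. -/
noncomputable def totalDomNum (G : SimpleGraph V) : ℕ :=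
  sInf {n | ∃ S : Finset V, IsTotalDomSet G S ∧ S.card = n}

/-- `S` is an isolate set of `G`: some vertex of `S` has no neighbor in `S`. -/
def IsIsolateSet (G : SimpleGraph V) (S : Finset V) : Prop :=
  ∃ v ∈ S, ∀ u ∈ S, ¬ G.Adj v u

/-- `S` is a maximal isolate set of `G`. -/
def IsMaximalIsolateSet (G : SimpleGraph V) (S : Finset V) : Prop :=
  IsIsolateSet G S ∧ ∀ T : Finset V, S ⊂ T → ¬ IsIsolateSet G T

/-- The isolate number: minimum cardinality of a maximal isolate set. -/
noncomputable def isolateNum (G : SimpleGraph V) : ℕ :=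
  sInf {n | ∃ S : Finset V, IsMaximalIsolateSet G S ∧ S.card = n}

/-- For any graph `G` with no isolated vertices, `γ_t(G) ≤ i_0(G) + 1`. -/
theorem totalDomNum_le_isolateNum_add_one (G : SimpleGraph V)
    (h : ∀ v : V, ∃ u : V, G.Adj v u) :
    totalDomNum G ≤ isolateNum G + 1 := by
  classical
  have key : ∀ S : Finset V, IsMaximalIsolateSet G S → totalDomNum G ≤ S.card + 1 := by
    rintro S ⟨⟨v, hv, hiso⟩, hmax⟩
    obtain ⟨x, hx⟩ := h v
    have ins : ∀ y, y ∉ S → ∀ w ∈ insert y S, ∃ u ∈ insert y S, G.Adj w u := by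
      intro y hy w hw
      by_contra hc
      push Not at hc
      exact hmax _ (Finset.ssubset_insert hy) ⟨w, hw, hc⟩
    have hxS : x ∉ S := fun hxS => hiso x hxS hx
    have htd : IsTotalDomSet G (insert x S) := by
      intro y
      by_cases hy : y ∈ S
      · obtain ⟨u, hu, ha⟩ := ins x hxS y (Finset.mem_insert_of_mem hy)
        exact ⟨u, hu, ha.symm⟩
      · obtain ⟨u, hu, ha⟩ := ins y hy y (Finset.mem_insert_self y S)
        rcases Finset.mem_insert.1 hu with rfl | hu
        · exact (G.loopless.irrefl _ ha).elim
        · exact ⟨u, Finset.mem_insert_of_mem hu, ha.symm⟩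
    rw [← Finset.card_insert_of_notMem hxS]
    exact Nat.sInf_le ⟨_, htd, rfl⟩
  rcases isEmpty_or_nonempty V with hV | ⟨⟨a⟩⟩
  · have : totalDomNum G ≤ 0 :=
      Nat.sInf_le ⟨∅, fun v => (hV.false v).elim, rfl⟩
    omega
  · have hne : {n | ∃ S : Finset V, IsMaximalIsolateSet G S ∧ S.card = n}.Nonempty := by
      obtain ⟨S, hS, hm⟩ := Finset.exists_max_image
        (Finset.univ.filter fun S : Finset V => IsIsolateSet G S) Finset.card
        ⟨{a}, Finset.mem_filter.2 ⟨Finset.mem_univ _, a, by simp⟩⟩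
      refine ⟨_, S, ⟨(Finset.mem_filter.1 hS).2, fun T hT hi => ?_⟩, rfl⟩
      have h1 := hm T (Finset.mem_filter.2 ⟨Finset.mem_univ _, hi⟩)
      have h2 := Finset.card_lt_card hT
      omega
    obtain ⟨S, hS, hc⟩ := Nat.sInf_mem hne
    have h3 := key S hS
    rw [hc] at h3
    exact h3
end

section
/- Let S be an isolate set of a graph G. Then S is a maximal isolate set of G if and only if every vertex in V∖S is adjacent to all the isolates of S (i.e., to every vertex of S that is isolated in the induced subgraph G[S]). -/
variable {V : Type*} [Fintype V] [DecidableEq V]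

/-- An isolate set `S` is maximal if and only if every vertex outside `S` is adjacent
to every isolate of `S` (every vertex of `S` having no neighbor in `S`). -/
theorem isMaximalIsolateSet_iff (G : SimpleGraph V) (S : Finset V)
    (hS : IsIsolateSet G S) :
    IsMaximalIsolateSet G S ↔
      ∀ v : V, v ∉ S → ∀ u ∈ S, (∀ w ∈ S, ¬ G.Adj u w) → G.Adj v u := by
  constructor
  · rintro ⟨_, hmax⟩ v hv u hu hiso
    by_contra hvu
    refine hmax (insert v S) (Finset.ssubset_insert hv) ⟨u, Finset.mem_insert_of_mem hu, ?_⟩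
    intro w hw
    rcases Finset.mem_insert.1 hw with rfl | hw
    · exact fun h => hvu h.symm
    · exact hiso w hw
  · intro h
    refine ⟨hS, ?_⟩
    rintro T hST ⟨t, htT, ht⟩
    by_cases htS : t ∈ S
    · obtain ⟨v, hvT, hvS⟩ := Finset.exists_of_ssubset hST
      exact ht v hvT (h v hvS t htS fun w hw => ht w (hST.1 hw)).symm
    · obtain ⟨u, hu, hiso⟩ := hS
      exact ht u (hST.1 hu) (h t htS u hu hiso)
end

section
/- If a connected graph G satisfies γ_t(G) = i_0(G) + 1, then the diameter of G is at most 2. -/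
variable {V : Type*} [Fintype V] [DecidableEq V]

/-- If a connected graph `G` satisfies `γ_t(G) = i_0(G) + 1`, then `diam(G) ≤ 2`. -/
theorem diam_le_two_of_totalDomNum_eq (G : SimpleGraph V) (hc : G.Connected)
    (h : totalDomNum G = isolateNum G + 1) :
    G.diam ≤ 2 := by
  classical
  have hmin : ∀ T : Finset V, IsTotalDomSet G T → isolateNum G + 1 ≤ T.card := by
    intro T hT
    rw [← h]
    exact Nat.sInf_le ⟨T, hT, rfl⟩
  have hS : ∃ S : Finset V, IsMaximalIsolateSet G S ∧ S.card = isolateNum G := by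
    by_cases hne : {n | ∃ S : Finset V, IsMaximalIsolateSet G S ∧ S.card = n}.Nonempty
    · exact Nat.sInf_mem hne
    · exfalso
      have h0 : isolateNum G = 0 := by
        unfold isolateNum
        rw [Set.not_nonempty_iff_eq_empty.mp hne, Nat.sInf_empty]
      have h1 : totalDomNum G = 1 := by omega
      have hT : {n | ∃ S : Finset V, IsTotalDomSet G S ∧ S.card = n}.Nonempty := by
        apply Nat.nonempty_of_pos_sInf
        change 0 < totalDomNum G
        omega
      obtain ⟨T, hT, hcard⟩ := Nat.sInf_mem hT
      change T.card = totalDomNum G at hcard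
      rw [h1] at hcard
      obtain ⟨a, rfl⟩ := Finset.card_eq_one.mp hcard
      obtain ⟨u, hu, hau⟩ := hT a
      rw [Finset.mem_singleton] at hu
      subst hu
      exact G.loopless.irrefl _ hau
  obtain ⟨S, ⟨⟨v, hvS, hv⟩, hmax⟩, hcard⟩ := hS
  have memS : ∀ x, x ∈ S ↔ ¬ G.Adj v x := by
    intro x
    refine ⟨hv x, fun hx => ?_⟩
    by_contra hxS
    refine hmax (insert x S) (Finset.ssubset_insert hxS) ⟨v, by simp [hvS], ?_⟩
    intro u hu
    rcases Finset.mem_insert.mp hu with rfl | hu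
    · exact hx
    · exact hv u hu
  have dom : ∀ u, G.Adj v u → IsTotalDomSet G (insert u S) := by
    intro u hu w
    by_contra hw
    push Not at hw
    have huS : u ∉ S := fun hh => hv u hh hu
    refine hmax (insert u S) (Finset.ssubset_insert huS) ⟨w, ?_, ?_⟩
    · refine Finset.mem_insert_of_mem ((memS w).2 ?_)
      exact hw v (Finset.mem_insert_of_mem hvS)
    · intro x hx hwx
      exact hw x hx hwx.symm
  have univ : ∀ x, x ≠ v → G.Adj v x := by
    by_contra hx
    push Not at hx
    obtain ⟨x, hxv, hx⟩ := hx
    obtain ⟨p⟩ := hc.preconnected v x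
    obtain ⟨d, -, hd1, hd2⟩ := p.exists_boundary_dart {z | z = v ∨ G.Adj v z} (Or.inl rfl)
      (by simp [hxv, hx])
    have hadj := d.adj
    generalize d.fst = u at *
    generalize d.snd = y at *
    simp only [Set.mem_setOf_eq, not_or] at hd1 hd2
    have hu : G.Adj v u := by
      rcases hd1 with rfl | h1
      · exact absurd hadj hd2.2
      · exact h1
    have huS : u ∉ S := fun hh => hv u hh hu
    have key : ∀ x ∈ S.erase v, ∃ z ∈ (S.erase v).erase y,
        G.Adj x z ∧ ∀ x' ∈ S, x' ≠ x → ¬ G.Adj x' z := by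
      intro x hx
      obtain ⟨hxv, hxS⟩ := Finset.mem_erase.mp hx
      have hxu : u ≠ x := fun e => huS (e ▸ hxS)
      have hn : ¬ IsTotalDomSet G ((insert u S).erase x) := by
        intro hT
        have := hmin _ hT
        rw [Finset.card_erase_of_mem (Finset.mem_insert_of_mem hxS),
          Finset.card_insert_of_notMem huS] at this
        omega
      unfold IsTotalDomSet at hn
      push Not at hn
      obtain ⟨z, hz⟩ := hn
      have hzu : ¬ G.Adj u z := hz u (by simp [hxu])
      have hzS : ∀ x' ∈ S, x' ≠ x → ¬ G.Adj x' z := fun x' h1 h2 => hz x' (by simp [h1, h2])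
      refine ⟨z, ?_, ?_, hzS⟩
      · simp only [Finset.mem_erase]
        refine ⟨?_, ?_, (memS z).2 (hzS v hvS hxv.symm)⟩
        · rintro rfl; exact hzu hadj
        · rintro rfl; exact hzu hu.symm
      · obtain ⟨t, ht, htz⟩ := dom u hu z
        rcases Finset.mem_insert.mp ht with rfl | ht
        · exact absurd htz hzu
        · by_cases e : t = x
          · exact e ▸ htz
          · exact absurd htz (hzS t ht e)
    choose! f hf1 hf2 hf3 using key
    have hle : (S.erase v).card ≤ ((S.erase v).erase y).card := by
      apply Finset.card_le_card_of_injOn f hf1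
      intro a ha b hb hab
      by_contra hne
      apply hf3 b hb a (Finset.mem_of_mem_erase ha) hne
      rw [← hab]
      exact hf2 a ha
    have hyS : y ∈ S.erase v := Finset.mem_erase.mpr ⟨hd2.1, (memS y).2 hd2.2⟩
    exact absurd hle (not_le.mpr (Finset.card_erase_lt_of_mem hyS))
  have hd : ∀ x, G.dist v x ≤ 1 := by
    intro x
    by_cases hx : x = v
    · subst hx; simp
    · exact (SimpleGraph.dist_eq_one_iff_adj.mpr (univ x hx)).le
  haveI : Nonempty V := ⟨v⟩
  obtain ⟨a, b, hab⟩ := G.exists_dist_eq_diam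
  rw [← hab]
  have h1 := hc.dist_triangle (u := a) (v := v) (w := b)
  have h2 := hd a
  have h3 := hd b
  rw [SimpleGraph.dist_comm] at h2
  omega
end

section
/- Every connected graph G satisfying γ_t(G) = i_0(G) + 1 has a dominating vertex, i.e., a vertex adjacent to every other vertex of G. -/
variable {V : Type*} [Fintype V] [DecidableEq V]

/-- Every connected graph `G` with `γ_t(G) = i_0(G) + 1` has a dominating vertex,
i.e. a vertex adjacent to every other vertex. -/
theorem exists_dominating_vertex (G : SimpleGraph V) (hc : G.Connected)
    (h : totalDomNum G = isolateNum G + 1) :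
    ∃ v : V, ∀ u : V, u ≠ v → G.Adj v u := by
  by_contra hno
  push Not at hno
  obtain ⟨S, hS, hcard⟩ : ∃ S : Finset V, IsMaximalIsolateSet G S ∧ S.card = isolateNum G := by
    by_cases hne : {n | ∃ S : Finset V, IsMaximalIsolateSet G S ∧ S.card = n}.Nonempty
    · exact Nat.sInf_mem hne
    · exfalso
      have h0 : isolateNum G = 0 := by
        rw [isolateNum, Set.not_nonempty_iff_eq_empty.mp hne, Nat.sInf_empty]
      have h1 : totalDomNum G = 1 := by omega
      have hne2 : {n | ∃ S : Finset V, IsTotalDomSet G S ∧ S.card = n}.Nonempty :=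
        Nat.nonempty_of_pos_sInf (by
          have : 0 < totalDomNum G := by omega
          exact this)
      obtain ⟨T, hT, hTc⟩ := Nat.sInf_mem hne2
      have hTc1 : T.card = 1 := hTc.trans h1
      obtain ⟨a, rfl⟩ := Finset.card_eq_one.mp hTc1
      obtain ⟨x, hx, hxa⟩ := hT a
      rw [Finset.mem_singleton] at hx
      subst hx
      exact G.loopless.irrefl _ hxa
  have htd : ∀ T : Finset V, IsTotalDomSet G T → S.card < T.card := by
    intro T hT
    have : totalDomNum G ≤ T.card := Nat.sInf_le ⟨T, hT, rfl⟩
    omega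
  obtain ⟨⟨v, hvS, hv⟩, hmax0⟩ := hS
  have hmax : ∀ u, u ∉ S → ∀ w ∈ S, ∃ x ∈ insert u S, G.Adj w x := by
    intro u hu w hw
    have := hmax0 (insert u S) (Finset.ssubset_insert hu)
    by_contra hcon
    push Not at hcon
    exact this ⟨w, Finset.mem_insert_of_mem hw, hcon⟩
  have hmem : ∀ x, x ∉ S → G.Adj v x := by
    intro x hx
    obtain ⟨y, hy, hvy⟩ := hmax x hx v hvS
    rcases Finset.mem_insert.mp hy with rfl | hy
    · exact hvy
    · exact absurd hvy (hv y hy)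
  -- a crossing edge from S \ {v} to the complement of S
  obtain ⟨b0, hb0, hb0v, u, hu, hub⟩ :
      ∃ b ∈ S, b ≠ v ∧ ∃ u, u ∉ S ∧ G.Adj b u := by
    obtain ⟨b, hbv, hb⟩ := hno v
    have hbS : b ∈ S := by
      by_contra hbS
      exact hb (hmem b hbS)
    obtain ⟨p⟩ := hc.preconnected b v
    obtain ⟨d, -, hd1, hd2⟩ := p.exists_boundary_dart {x | x ∈ S ∧ x ≠ v} ⟨hbS, hbv⟩ (by simp)
    refine ⟨d.fst, hd1.1, hd1.2, d.snd, ?_, d.adj⟩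
    intro hs
    have : d.snd = v := by
      by_contra hne
      exact hd2 ⟨hs, hne⟩
    exact hv _ hd1.1 (this ▸ d.adj.symm)
  have hvu : G.Adj v u := hmem u hu
  have hTcard : ∀ w ∈ S, (insert u (S.erase w)).card ≤ S.card := by
    intro w hw
    have h1 := Finset.card_insert_le u (S.erase w)
    have h2 := Finset.card_erase_add_one hw
    omega
  have hnot : ∀ w ∈ S, w ≠ v → ∃ y ∈ S, ∀ x ∈ insert u (S.erase w), ¬ G.Adj x y := by
    intro w hw hwv
    by_contra hcon
    push Not at hcon
    have := htd (insert u (S.erase w)) (by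
      intro y
      by_cases hy : y ∈ S
      · exact hcon y hy
      · exact ⟨v, by simp [hvS, hwv.symm], hmem y hy⟩)
    have := hTcard w hw
    omega
  have step1 : ∀ w ∈ S, w ≠ v → ∃ x ∈ S, G.Adj w x := by
    intro w hw hwv
    by_contra hcon
    push Not at hcon
    obtain ⟨y, hy, hyT⟩ := hnot w hw hwv
    obtain ⟨x, hx, hyx⟩ := hmax u hu y hy
    rcases Finset.mem_insert.mp hx with rfl | hxS
    · exact hyT x (Finset.mem_insert_self _ _) hyx.symm
    · by_cases hxw : x = w
      · subst hxw
        exact hcon y hy hyx.symm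
      · exact hyT x (by simp [hxS, hxw]) hyx.symm
  have step3 : ∀ b ∈ S.erase v, ∃ q ∈ S.erase v, G.Adj q b ∧ ¬ G.Adj q u ∧
      ∀ x ∈ S, G.Adj q x → x = b := by
    intro b hb
    obtain ⟨hbv, hbS⟩ := Finset.mem_erase.mp hb
    obtain ⟨q, hq, hqT⟩ := hnot b hbS hbv
    have hqu : ¬ G.Adj q u := fun hh => hqT u (Finset.mem_insert_self _ _) hh.symm
    have hqv : q ≠ v := by
      rintro rfl
      exact hqu hvu
    have huniq : ∀ x ∈ S, G.Adj q x → x = b := by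
      intro x hx hqx
      by_contra hxb
      exact hqT x (by simp [hx, hxb]) hqx.symm
    obtain ⟨x, hx, hqx⟩ := step1 q hq hqv
    have hxb := huniq x hx hqx
    subst hxb
    exact ⟨q, Finset.mem_erase.mpr ⟨hqv, hq⟩, hqx, hqu, huniq⟩
  choose! p hpm hpa hpu hpq using step3
  have hinj : Set.InjOn p (S.erase v : Finset V) := by
    intro b hb b' hb' hbb
    have hb1 : b ∈ S.erase v := hb
    have hb2 : b' ∈ S.erase v := hb'
    exact hpq b' hb2 b (Finset.mem_of_mem_erase hb1) (hbb ▸ hpa b hb1)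
  have hsurj := Finset.surjOn_of_injOn_of_card_le p (fun b hb => hpm b hb) hinj le_rfl
  obtain ⟨b, hb, hpb⟩ := hsurj (Finset.mem_coe.mpr (Finset.mem_erase.mpr ⟨hb0v, hb0⟩))
  exact hpu b hb (hpb ▸ hub)
end

section
/- A connected graph G with at least two vertices satisfies γ_t(G) = i_0(G) + 1 if and only if G contains a dominating vertex, i.e., a vertex adjacent to every other vertex of G. -/
variable {V : Type*} [Fintype V] [DecidableEq V]

theorem tds_two_le (G : SimpleGraph V) (hc : G.Connected) (S : Finset V)
    (h : IsTotalDomSet G S) : 2 ≤ S.card := by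
  obtain ⟨v⟩ := hc.nonempty
  obtain ⟨a, ha, hav⟩ := h v
  obtain ⟨b, hb, hba⟩ := h a
  exact Finset.one_lt_card.2 ⟨a, ha, b, hb, hba.ne'⟩

/-- A maximal isolate set with at least two vertices yields a total dominating set
of at most the same size. -/
theorem exists_tds_of_maximal (G : SimpleGraph V) (hc : G.Connected) (S : Finset V)
    (hS : IsMaximalIsolateSet G S) (h2 : 1 < S.card) :
    ∃ T : Finset V, IsTotalDomSet G T ∧ T.card ≤ S.card := by
  obtain ⟨⟨v, hv, hvi⟩, hmax⟩ := hS
  -- every isolated vertex of S is adjacent to everything outside S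
  have hout : ∀ x ∈ S, (∀ y ∈ S, ¬ G.Adj x y) → ∀ w, w ∉ S → G.Adj x w := by
    intro x hx hxi w hw
    by_contra hn
    refine hmax (insert w S) (Finset.ssubset_insert hw) ⟨x, by simp [hx], ?_⟩
    intro y hy
    rcases Finset.mem_insert.1 hy with rfl | hy
    · exact hn
    · exact hxi y hy
  obtain ⟨r₀, hr₀, hr₀v⟩ := Finset.exists_mem_ne h2 v
  obtain ⟨p⟩ := hc.preconnected r₀ v
  obtain ⟨d, -, hd1, hd2⟩ := p.exists_boundary_dart {w | w ∈ S ∧ w ≠ v} ⟨hr₀, hr₀v⟩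
    (fun h => h.2 rfl)
  obtain ⟨⟨r, u⟩, hru⟩ := d
  simp only [Set.mem_setOf_eq] at hd1 hd2 hru
  obtain ⟨hr, hrv⟩ := hd1
  have huS : u ∉ S := by
    intro hu
    apply hd2
    refine ⟨hu, ?_⟩
    rintro rfl
    exact hvi r hr hru.symm
  have key : ∀ x ∈ S, ∀ T : Finset V, T = insert u (S.erase x) →
      IsTotalDomSet G T → ∃ T : Finset V, IsTotalDomSet G T ∧ T.card ≤ S.card := by
    intro x hx T hT hTD
    refine ⟨T, hTD, ?_⟩
    have h1 := Finset.card_insert_le u (S.erase x)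
    have h3 := Finset.card_erase_add_one hx
    rw [hT]; omega
  have huv : G.Adj v u := hout v hv hvi u huS
  by_cases hA : ∃ x ∈ S, x ≠ v ∧ ∀ y ∈ S, ¬ G.Adj x y
  · obtain ⟨x, hx, hxv, hxi⟩ := hA
    refine key v hv _ rfl ?_
    intro w
    by_cases hw : w ∈ S
    · by_cases hwi : ∀ y ∈ S, ¬ G.Adj w y
      · exact ⟨u, by simp, (hout w hw hwi u huS).symm⟩
      · push Not at hwi
        obtain ⟨y, hy, hwy⟩ := hwi
        refine ⟨y, ?_, hwy.symm⟩
        have : y ≠ v := by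
          rintro rfl
          exact hvi w hw hwy.symm
        simp [this, hy]
    · exact ⟨x, by simp [hxv, hx], hout x hx hxi w hw⟩
  · push Not at hA
    have fin : ∀ x ∈ S, x ≠ v → (∀ w ∈ S, w ≠ v → w ≠ r → ∃ y ∈ S, y ≠ x ∧ G.Adj w y) →
        IsTotalDomSet G (insert u (S.erase x)) := by
      intro x hx hxv h w
      by_cases hw : w ∈ S
      · by_cases hwv : w = v
        · subst hwv; exact ⟨u, by simp, huv.symm⟩
        by_cases hwr : w = r
        · subst hwr; exact ⟨u, by simp, hru.symm⟩
        obtain ⟨y, hy, hyx, hwy⟩ := h w hw hwv hwr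
        exact ⟨y, by simp [hyx, hy], hwy.symm⟩
      · exact ⟨v, by simp [hxv.symm, hv], hout v hv hvi w hw⟩
    by_cases hB : ∀ w ∈ S, w ≠ v → w ≠ r → ∃ y ∈ S, y ≠ r ∧ G.Adj w y
    · exact key r hr _ rfl (fin r hr hrv hB)
    · push Not at hB
      obtain ⟨x, hx, hxv, hxr, hxo⟩ := hB
      refine key x hx _ rfl (fin x hx hxv ?_)
      intro w hw hwv hwr
      obtain ⟨y, hy, hwy⟩ := hA w hw hwv
      refine ⟨y, hy, ?_, hwy⟩
      rintro rfl
      exact hxo w hw hwr hwy.symm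

theorem totalDomNum_eq_isolateNum_add_one_iff (G : SimpleGraph V) (hc : G.Connected)
    (hn : 1 < Fintype.card V) :
    totalDomNum G = isolateNum G + 1 ↔ ∃ v : V, ∀ u : V, u ≠ v → G.Adj v u := by
  constructor
  · intro h
    have hne : {n | ∃ S : Finset V, IsTotalDomSet G S ∧ S.card = n}.Nonempty := by
      apply Nat.nonempty_of_pos_sInf
      change 0 < totalDomNum G
      omega
    obtain ⟨T, hT, hTc⟩ := Nat.sInf_mem hne
    change T.card = totalDomNum G at hTc
    have hT2 := tds_two_le G hc T hT
    have hne' : {n | ∃ S : Finset V, IsMaximalIsolateSet G S ∧ S.card = n}.Nonempty := by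
      apply Nat.nonempty_of_pos_sInf
      change 0 < isolateNum G
      omega
    obtain ⟨S, hS, hSc⟩ := Nat.sInf_mem hne'
    change S.card = isolateNum G at hSc
    have hS1 : ¬ 1 < S.card := by
      intro h1
      obtain ⟨T', hT', hle⟩ := exists_tds_of_maximal G hc S hS h1
      have : totalDomNum G ≤ T'.card := Nat.sInf_le ⟨T', hT', rfl⟩
      omega
    obtain ⟨v, rfl⟩ := Finset.card_eq_one.1 (show S.card = 1 by omega)
    refine ⟨v, fun u hu => ?_⟩
    by_contra hna
    refine hS.2 (insert u {v}) (Finset.ssubset_insert (by simpa using hu)) ⟨v, by simp, ?_⟩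
    intro y hy
    simp only [Finset.mem_insert, Finset.mem_singleton] at hy
    rcases hy with rfl | rfl
    · exact hna
    · exact G.irrefl
  · rintro ⟨v, hv⟩
    have h1 : isolateNum G = 1 := by
      have hmem : (1 : ℕ) ∈ {n | ∃ S : Finset V, IsMaximalIsolateSet G S ∧ S.card = n} := by
        refine ⟨{v}, ⟨⟨v, by simp, by simp⟩, ?_⟩, by simp⟩
        rintro T hT ⟨x, hx, hxi⟩
        obtain ⟨hsub, hns⟩ := Finset.ssubset_iff_subset_ne.1 hT
        have hvT : v ∈ T := hsub (by simp)
        by_cases hxv : x = v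
        · subst hxv
          apply hns
          ext y
          simp only [Finset.mem_singleton]
          constructor
          · rintro rfl; exact hx
          · intro hy
            by_contra hyx
            exact hxi y hy (hv y hyx)
        · exact hxi v hvT (hv x hxv).symm
      apply le_antisymm (Nat.sInf_le hmem)
      obtain ⟨S, hS, hSc⟩ := Nat.sInf_mem ⟨1, hmem⟩
      change S.card = isolateNum G at hSc
      change 1 ≤ isolateNum G; rw [← hSc]
      obtain ⟨x, hx, -⟩ := hS.1
      exact Finset.card_pos.2 ⟨x, hx⟩
    have h2 : totalDomNum G = 2 := by
      obtain ⟨u, hu⟩ := Fintype.exists_ne_of_one_lt_card hn v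
      have hmem : (2 : ℕ) ∈ {n | ∃ S : Finset V, IsTotalDomSet G S ∧ S.card = n} := by
        refine ⟨{v, u}, ?_, Finset.card_pair hu.symm⟩
        intro w
        by_cases hw : w = v
        · subst hw; exact ⟨u, by simp, (hv u hu).symm⟩
        · exact ⟨v, by simp, hv w hw⟩
      apply le_antisymm (Nat.sInf_le hmem)
      obtain ⟨S, hS, hSc⟩ := Nat.sInf_mem ⟨2, hmem⟩
      change S.card = totalDomNum G at hSc
      change 2 ≤ totalDomNum G; rw [← hSc]
      exact tds_two_le G hc S hS
    omega
end

section
/- Let T be a tree of order n ≥ 3 with l leaves. Then γ(T) = n − l if and only if every vertex of T is either a leaf or a support vertex. -/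
open Finset

variable {V : Type*} [Fintype V] [DecidableEq V]

/-- `S` is a dominating set of `G`: every vertex outside `S` has a neighbor in `S`. -/
def IsDomSet (G : SimpleGraph V) (S : Finset V) : Prop :=
  ∀ v : V, v ∉ S → ∃ u ∈ S, G.Adj u v

/-- The domination number: minimum cardinality of a dominating set. -/
noncomputable def domNum (G : SimpleGraph V) : ℕ :=
  sInf {n | ∃ S : Finset V, IsDomSet G S ∧ S.card = n}

theorem aux_leaf_unique (T : SimpleGraph V) [DecidableRel T.Adj] {a b c : V}
    (ha : T.degree a = 1) (hb : T.Adj a b) (hc : T.Adj a c) : b = c :=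
  (T.degree_eq_one_iff_existsUnique_adj.1 ha).unique hb hc

theorem aux_leaves_not_adj (T : SimpleGraph V) [DecidableRel T.Adj]
    (hT : T.Connected) (hn : 3 ≤ Fintype.card V) {a b : V} (hab : T.Adj a b)
    (ha : T.degree a = 1) (hb : T.degree b = 1) : False := by
  have key : ∀ u w : V, T.Walk u w → (u = a ∨ u = b) → (w = a ∨ w = b) := by
    intro u w p
    induction p with
    | nil => exact id
    | cons h p ih =>
      intro hu
      apply ih
      rcases hu with rfl | rfl
      · exact Or.inr (aux_leaf_unique T ha h hab)
      · exact Or.inl (aux_leaf_unique T hb h hab.symm)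
  have hsub : (univ : Finset V) ⊆ {a, b} := by
    intro w _
    obtain ⟨p⟩ := hT.preconnected a w
    simpa using key a w p (Or.inl rfl)
  have h1 := Finset.card_le_card hsub
  have h2 : ({a, b} : Finset V).card ≤ 2 := Finset.card_le_two
  rw [Finset.card_univ] at h1
  omega

theorem aux_domNum_le (T : SimpleGraph V) {S : Finset V} (h : IsDomSet T S) :
    domNum T ≤ S.card := Nat.sInf_le ⟨S, h, rfl⟩

/-- For a tree `T` of order `n ≥ 3` with `l` leaves, `γ(T) = n - l` if and only if
every vertex of `T` is a leaf or a support vertex (a neighbor of a leaf). -/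
theorem domNum_eq_card_sub_leaves_iff (T : SimpleGraph V) [DecidableRel T.Adj]
    (hT : T.IsTree) (hn : 3 ≤ Fintype.card V) :
    domNum T = Fintype.card V - (univ.filter fun v => T.degree v = 1).card ↔
      ∀ v : V, T.degree v = 1 ∨ ∃ u : V, T.Adj v u ∧ T.degree u = 1 := by
  have hcon : T.Connected := hT.connected
  have hcard : Fintype.card V - (univ.filter fun v => T.degree v = 1).card
      = (univ.filter fun v => ¬ T.degree v = 1).card := by
    have := Finset.card_filter_add_card_filter_not (s := (univ : Finset V))
      (fun v => T.degree v = 1)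
    rw [Finset.card_univ] at this
    omega
  rw [hcard]
  have hleaf : ∀ v, T.degree v = 1 → ∃ u, T.Adj v u ∧ ¬ T.degree u = 1 := by
    intro v hv
    obtain ⟨u, hu, -⟩ := T.degree_eq_one_iff_existsUnique_adj.1 hv
    exact ⟨u, hu, fun h => aux_leaves_not_adj T hcon hn hu hv h⟩
  constructor
  · intro h
    by_contra! hne
    obtain ⟨v, hv, hvs⟩ := hne
    have hvI : v ∈ univ.filter fun v => ¬ T.degree v = 1 := by simpa using hv
    have hdom : IsDomSet T ((univ.filter fun v => ¬ T.degree v = 1).erase v) := by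
      intro x hx
      by_cases hxv : x = v
      · subst hxv
        have : Nontrivial V := Fintype.one_lt_card_iff_nontrivial.1 (by omega)
        obtain ⟨u, hu⟩ := hcon.preconnected.exists_adj_of_nontrivial x
        exact ⟨u, by simp [hu.ne', hvs u hu], hu.symm⟩
      · have hx1 : T.degree x = 1 := by
          by_contra h1
          exact hx (by simp [hxv, h1])
        obtain ⟨u, hu, hu1⟩ := hleaf x hx1
        refine ⟨u, ?_, hu.symm⟩
        have : u ≠ v := by
          rintro rfl
          exact hvs x hu.symm hx1
        simp [this, hu1]
    have h1 := aux_domNum_le T hdom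
    have h2 := Finset.card_erase_lt_of_mem hvI
    omega
  · intro h
    apply le_antisymm
    · apply aux_domNum_le
      intro x hx
      obtain ⟨u, hu, hu1⟩ := hleaf x (by simpa using hx)
      exact ⟨u, by simpa using hu1, hu.symm⟩
    · refine le_csInf ⟨_, univ, fun v hv => absurd (mem_univ v) hv, rfl⟩ ?_
      rintro n ⟨S, hS, rfl⟩
      have h' : ∀ v, ∃ w, ¬ T.degree v = 1 →
          w ∈ S ∧ (w = v ∨ (T.Adj v w ∧ T.degree w = 1)) := by
        intro v
        by_cases hvS : v ∈ S
        · exact ⟨v, fun _ => ⟨hvS, Or.inl rfl⟩⟩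
        by_cases hv : T.degree v = 1
        · exact ⟨v, fun h => absurd hv h⟩
        obtain ⟨u, hu, hu1⟩ := (h v).resolve_left hv
        refine ⟨u, fun _ => ⟨?_, Or.inr ⟨hu, hu1⟩⟩⟩
        by_contra huS
        obtain ⟨x, hx, hxu⟩ := hS u huS
        rw [aux_leaf_unique T hu1 hxu.symm hu.symm] at hx
        exact hvS hx
      choose f hf using h'
      apply Finset.card_le_card_of_injOn f
      · intro v hv
        exact (hf v (by simpa using hv)).1
      · intro a ha b hb hab
        have ha : ¬ T.degree a = 1 := by simpa using ha
        have hb : ¬ T.degree b = 1 := by simpa using hb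
        have h1 := (hf a ha).2
        have h2 := (hf b hb).2
        rw [← hab] at h2
        rcases h1 with h1 | ⟨h1, h1d⟩ <;> rcases h2 with h2 | ⟨h2, h2d⟩
        · exact h1.symm.trans h2
        · rw [h1] at h2d; exact absurd h2d ha
        · rw [h2] at h1d; exact absurd h1d hb
        · exact aux_leaf_unique T h1d h1.symm h2.symm
end

section
/- If D is a minimum total dominating set in a nontrivial connected graph G, then there exists a spanning tree T of G such that D is a minimum total dominating set of T and the number of connected components of the subgraph of T induced by D equals the number of connected components of the subgraph of G induced by D. -/
variable {V : Type*} [Fintype V] [DecidableEq V]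

/-- Attach the vertices of `S` as leaves to an acyclic graph `F`. -/
theorem exists_attach {W : Type*} [DecidableEq W] (G F : SimpleGraph W) (D : Finset W)
    (hFG : F ≤ G) (hF : F.IsAcyclic) (hFD : ∀ a b, F.Adj a b → a ∈ D)
    (hdom : ∀ v : W, ∃ u ∈ D, G.Adj u v) (S : Finset W) (hS : ∀ v ∈ S, v ∉ D) :
    ∃ H : SimpleGraph W, F ≤ H ∧ H ≤ G ∧ H.IsAcyclic ∧
      (∀ v ∈ S, ∃ u ∈ D, H.Adj u v) ∧ (∀ a b, H.Adj a b → a ∈ D ∨ a ∈ S) := by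
  induction S using Finset.induction_on with
  | empty => exact ⟨F, le_rfl, hFG, hF, by simp, fun a b h => Or.inl (hFD a b h)⟩
  | insert v S hv ih =>
    obtain ⟨H, h1, h2, h3, h4, h5⟩ := ih (fun w hw => hS w (Finset.mem_insert_of_mem hw))
    obtain ⟨u, hu, huv⟩ := hdom v
    have hvD : v ∉ D := hS v (Finset.mem_insert_self _ _)
    have hnr : ¬ H.Reachable v u := by
      rintro ⟨w⟩
      cases w with
      | nil => exact hvD hu
      | cons h _ =>
        rcases h5 _ _ h with h | h
        · exact hvD h
        · exact hv h
    refine ⟨H ⊔ SimpleGraph.edge v u, h1.trans le_sup_left, sup_le h2 ?_,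
      SimpleGraph.IsAcyclic.sup_edge_of_not_reachable hnr h3, ?_, ?_⟩
    · intro a b hab
      rw [SimpleGraph.edge_adj] at hab
      rcases hab with ⟨⟨rfl, rfl⟩ | ⟨rfl, rfl⟩, _⟩
      · exact huv.symm
      · exact huv
    · intro w hw
      rcases Finset.mem_insert.1 hw with rfl | hw
      · refine ⟨u, hu, Or.inr ?_⟩
        rw [SimpleGraph.edge_adj]
        exact ⟨Or.inr ⟨rfl, rfl⟩, huv.ne⟩
      · obtain ⟨x, hx, hxw⟩ := h4 w hw
        exact ⟨x, hx, Or.inl hxw⟩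
    · intro a b hab
      rcases hab with hab | hab
      · rcases h5 a b hab with h | h
        · exact Or.inl h
        · exact Or.inr (Finset.mem_insert_of_mem h)
      · rw [SimpleGraph.edge_adj] at hab
        rcases hab with ⟨⟨rfl, rfl⟩ | ⟨rfl, rfl⟩, _⟩
        · exact Or.inr (Finset.mem_insert_self _ _)
        · exact Or.inl hu

theorem reachable_induce_of_walk {W : Type*} (T F : SimpleGraph W) (D : Set W)
    (hFT : F ≤ T) (hFD : ∀ a b, F.Adj a b → b ∈ D) {a b : W} (w : F.Walk a b)
    (ha : a ∈ D) (hb : b ∈ D) : (T.induce D).Reachable ⟨a, ha⟩ ⟨b, hb⟩ := by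
  induction w with
  | nil => exact SimpleGraph.Reachable.refl _
  | cons h p ih =>
    have hc := hFD _ _ h
    refine SimpleGraph.Reachable.trans (SimpleGraph.Adj.reachable ?_) (ih hc hb)
    exact hFT h

/-- If `D` is a minimum total dominating set of a nontrivial connected graph `G`, then
there is a spanning tree `T` of `G` in which `D` is a minimum total dominating set
and the induced subgraph `T[D]` has as many connected components as `G[D]`. -/
theorem exists_spanning_tree_totalDomSet (G : SimpleGraph V)
    (hc : G.Connected) (hn : 1 < Fintype.card V)
    (D : Finset V) (hD : IsTotalDomSet G D) (hmin : D.card = totalDomNum G) :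
    ∃ T : SimpleGraph V, T ≤ G ∧ T.IsTree ∧
      IsTotalDomSet T D ∧ D.card = totalDomNum T ∧
      Nat.card (T.induce (↑D : Set V)).ConnectedComponent =
        Nat.card (G.induce (↑D : Set V)).ConnectedComponent := by
  let K : SimpleGraph V :=
    { Adj := fun a b => G.Adj a b ∧ a ∈ D ∧ b ∈ D
      symm := ⟨fun a b h => ⟨h.1.symm, h.2.2, h.2.1⟩⟩
      loopless := ⟨fun a h => h.1.ne rfl⟩ }
  obtain ⟨F, hFK, hF, hFr⟩ := K.exists_isAcyclic_reachable_eq_le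
  have hKG : K ≤ G := fun a b h => h.1
  obtain ⟨H, hFH, hHG, hH, hdom, -⟩ := exists_attach G F D (hFK.trans hKG) hF
    (fun a b h => (hFK h).2.1) hD (Finset.univ \ D) (by simp)
  obtain ⟨T, hHT, hTG, hT⟩ : ∃ T : SimpleGraph V, H ≤ T ∧ T ≤ G ∧ T.IsTree := by
    obtain ⟨T, hT⟩ := hc.exists_isTree_le_of_le_of_isAcyclic hHG hH
    exact ⟨T, by tauto⟩
  have hTD : IsTotalDomSet T D := by
    intro v
    by_cases hv : v ∈ D
    · obtain ⟨u, hu, huv⟩ := hD v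
      have hk : K.Reachable v u := SimpleGraph.Adj.reachable (show K.Adj v u from ⟨huv.symm, hv, hu⟩)
      rw [← hFr] at hk
      obtain ⟨w⟩ := hk
      cases w with
      | nil => exact absurd rfl huv.ne
      | cons h _ => exact ⟨_, (hFK h).2.2, (hHT (hFH h)).symm⟩
    · obtain ⟨u, hu, huv⟩ := hdom v (by simp [hv])
      exact ⟨u, hu, hHT huv⟩
  refine ⟨T, hTG, hT, hTD, ?_, ?_⟩
  · apply le_antisymm
    · refine le_csInf ⟨_, D, hTD, rfl⟩ ?_
      rintro n ⟨S, hS, rfl⟩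
      rw [hmin]
      refine Nat.sInf_le ⟨S, fun v => ?_, rfl⟩
      obtain ⟨u, hu, h⟩ := hS v
      exact ⟨u, hu, hTG h⟩
    · exact Nat.sInf_le ⟨D, hTD, rfl⟩
  · have key : (T.induce (↑D : Set V)).Reachable = (G.induce (↑D : Set V)).Reachable := by
      funext a b
      apply propext
      constructor
      · intro h
        exact h.mono (fun x y hxy => hTG hxy)
      · rintro ⟨w⟩
        induction w with
        | nil => exact SimpleGraph.Reachable.refl _
        | @cons x y z h p ih =>
          refine SimpleGraph.Reachable.trans ?_ ih
          have hk : K.Reachable x y :=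
            SimpleGraph.Adj.reachable (show K.Adj x y from ⟨h, x.2, y.2⟩)
          rw [← hFr] at hk
          obtain ⟨q⟩ := hk
          exact reachable_induce_of_walk T F _ (hFH.trans hHT)
            (fun a b h => (hFK h).2.2) q x.2 y.2
    unfold SimpleGraph.ConnectedComponent
    rw [key]
end

section
/- If a nontrivial connected graph G satisfies γ_t(G) = (diam(G) + 1)/2 (equivalently 2·γ_t(G) = diam(G) + 1), then G has a spanning tree T which is a caterpillar and satisfies diam(T) = diam(G). -/
variable {V : Type*} [Fintype V] [DecidableEq V]

/-- `H` is a path graph: it has a (possibly trivial) path passing through all its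
vertices and using all its edges. -/
def IsPathGraph {W : Type*} (H : SimpleGraph W) : Prop :=
  ∃ (u v : W) (p : H.Walk u v), p.IsPath ∧ (∀ w : W, w ∈ p.support) ∧
    ∀ e ∈ H.edgeSet, e ∈ p.edges

/-- `T` is a caterpillar: a tree in which removing all leaves (vertices of degree one)
leaves a path. -/
def IsCaterpillar (T : SimpleGraph V) : Prop :=
  T.IsTree ∧ IsPathGraph (T.induce {v : V | (T.neighborSet v).ncard ≠ 1})

open SimpleGraph
theorem core_count (G : SimpleGraph V) (S : Finset V) (hS : IsTotalDomSet G S)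
    (l : V → ℕ) (hl : ∀ u v, G.Adj u v → l u ≤ l v + 1) (d : ℕ) (v : ℕ → V)
    (hv : ∀ i ≤ d, l (v i) = i) (j : ℕ) (hj : 4 * j + 1 ≤ d) :
    2 * j + 2 ≤ (S.filter (fun x => l x ≤ 4 * j + 2)).card := by
  have key : ∀ (m : ℕ) (A : Finset V) (B : Finset V) (a x : V), A ⊆ B → m ≤ A.card →
      a ∈ B → x ∈ B → a ∉ A → x ∉ A → a ≠ x → m + 2 ≤ B.card := by
    intro m A B a x hAB hm ha hx ha' hx' hax
    have h1 : insert a (insert x A) ⊆ B := by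
      intro y hy
      simp only [Finset.mem_insert] at hy
      rcases hy with rfl | rfl | hy
      · exact ha
      · exact hx
      · exact hAB hy
    have h2 := Finset.card_le_card h1
    rw [Finset.card_insert_of_notMem (by simp [hax, ha']), Finset.card_insert_of_notMem hx'] at h2
    omega
  induction j with
  | zero =>
    obtain ⟨a, ha, ha0⟩ := hS (v 0)
    obtain ⟨b, hb, hba⟩ := hS a
    have h1 := hl _ _ ha0
    have h2 := hl _ _ hba
    have h0 := hv 0 (by omega)
    refine key 0 ∅ _ a b (by simp) (by simp) ?_ ?_ (by simp) (by simp) hba.ne'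
    · simp only [Finset.mem_filter]; exact ⟨ha, by omega⟩
    · simp only [Finset.mem_filter]; exact ⟨hb, by omega⟩
  | succ j ih =>
    have ih := ih (by omega)
    obtain ⟨a, ha, ha0⟩ := hS (v (4 * j + 4))
    obtain ⟨b, hb, hba⟩ := hS a
    obtain ⟨c, hc, hc0⟩ := hS (v (4 * j + 5))
    have h1 := hl _ _ ha0
    have h1' := hl _ _ ha0.symm
    have h2 := hl _ _ hba
    have h2' := hl _ _ hba.symm
    have h3 := hl _ _ hc0
    have h3' := hl _ _ hc0.symm
    rw [hv _ (by omega)] at h1 h1' h3 h3'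
    have : ∃ x ∈ S, a ≠ x ∧ 4 * j + 3 ≤ l x ∧ l x ≤ 4 * j + 6 := by
      by_cases hb3 : 4 * j + 3 ≤ l b
      · exact ⟨b, hb, hba.ne', hb3, by omega⟩
      · refine ⟨c, hc, ?_, by omega, by omega⟩
        rintro rfl
        omega
    obtain ⟨x, hx, hax, hx3, hx6⟩ := this
    refine key (2 * j + 2) _ _ a x ?_ ih ?_ ?_ ?_ ?_ hax
    · intro y; simp only [Finset.mem_filter]; rintro ⟨h, h'⟩; exact ⟨h, by omega⟩
    · simp only [Finset.mem_filter]; exact ⟨ha, by omega⟩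
    · simp only [Finset.mem_filter]; exact ⟨hx, by omega⟩
    · simp only [Finset.mem_filter]; omega
    · simp only [Finset.mem_filter]; omega

theorem core_levels (G : SimpleGraph V) (S : Finset V) (hS : IsTotalDomSet G S)
    (l : V → ℕ) (hl : ∀ u v, G.Adj u v → l u ≤ l v + 1) (d : ℕ) (v : ℕ → V)
    (hv : ∀ i ≤ d, l (v i) = i) (hd : ∀ x, l x ≤ d) (hc : 2 * S.card = d + 1) :
    ∃ j, d = 4 * j + 3 ∧ (∀ s ∈ S, l s % 4 = 1 ∨ l s % 4 = 2) ∧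
      (∀ s ∈ S, ∀ t ∈ S, l s = l t → s = t) := by
  have hA := core_count G S hS l hl d v hv
  have hB := core_count G S hS (fun x => d - l x)
    (by intro x y h; have := hl _ _ h.symm; have := hd x; have := hd y; omega) d
    (fun i => v (d - i)) (by intro i hi; rw [hv _ (by omega)]; omega)
  have hle : ∀ i, (S.filter (fun x => l x ≤ i)).card ≤ S.card := fun i =>
    Finset.card_filter_le _ _
  have hsplit : ∀ i, (S.filter (fun x => l x ≤ i)).card +
      (S.filter (fun x => ¬ l x ≤ i)).card = S.card := fun i =>
    Finset.card_filter_add_card_filter_not _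
  obtain ⟨j, hj⟩ : ∃ j, d = 4 * j + 3 := by
    refine ⟨d / 4, ?_⟩
    by_contra hne
    have h1 := hA (d / 4) (by omega)
    have h2 := hle (4 * (d / 4) + 2)
    omega
  have hlow : ∀ k ≤ j, (S.filter (fun x => l x ≤ 4 * k)).card ≤ 2 * k := by
    intro k hk
    have h1 := hB (j - k) (by omega)
    have h2 := hsplit (4 * k)
    have h3 : (S.filter (fun x => d - l x ≤ 4 * (j - k) + 2)) =
        (S.filter (fun x => ¬ l x ≤ 4 * k)) := by
      apply Finset.filter_congr
      intro x _
      have := hd x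
      omega
    rw [h3] at h1
    omega
  have hup : ∀ k ≤ j, 2 * k + 2 ≤ (S.filter (fun x => l x ≤ 4 * k + 2)).card := by
    intro k hk
    exact hA k (by omega)
  have hlow' : ∀ k ≤ j, (S.filter (fun x => l x ≤ 4 * k + 4)).card ≤ 2 * k + 2 := by
    intro k hk
    rcases Nat.lt_or_ge k j with h | h
    · exact hlow (k + 1) h
    · have := hle (4 * k + 4)
      omega
  have hmod : ∀ s ∈ S, l s % 4 = 1 ∨ l s % 4 = 2 := by
    intro s hs
    by_contra hne
    have hsd := hd s
    by_cases h0 : l s = 0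
    · have h1 := hlow 0 (by omega)
      have h2 : s ∈ S.filter (fun x => l x ≤ 4 * 0) := by
        simp only [Finset.mem_filter]; exact ⟨hs, by omega⟩
      have := Finset.card_pos.2 ⟨s, h2⟩
      omega
    · obtain ⟨k, hk⟩ : ∃ k, l s = 4 * k + 3 ∨ l s = 4 * k + 4 := ⟨(l s - 1) / 4, by omega⟩
      have h1 := hup k (by omega)
      have h2 := hlow' k (by omega)
      have h3 : S.filter (fun x => l x ≤ 4 * k + 2) ⊂ S.filter (fun x => l x ≤ 4 * k + 4) := by
        rw [Finset.ssubset_iff_of_subset]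
        · refine ⟨s, ?_, ?_⟩ <;> simp only [Finset.mem_filter]
          · exact ⟨hs, by omega⟩
          · omega
        · intro y; simp only [Finset.mem_filter]; rintro ⟨h, h'⟩; exact ⟨h, by omega⟩
      have := Finset.card_lt_card h3
      omega
  refine ⟨j, hj, hmod, ?_⟩
  intro s hs t ht hst
  by_contra hne
  have hsd := hd s
  set k := l s / 4 with hk
  -- a third vertex
  obtain ⟨x, hx, hxs, hx1, hx2⟩ : ∃ x ∈ S, l x ≠ l s ∧ 4 * k + 1 ≤ l x ∧ l x ≤ 4 * k + 2 := by
    rcases hmod s hs with h | h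
    · obtain ⟨x, hx, hxa⟩ := hS (v (4 * k + 3))
      have h1 := hl _ _ hxa
      have h2 := hl _ _ hxa.symm
      rw [hv _ (by omega)] at h1 h2
      have := hmod x hx
      exact ⟨x, hx, by omega, by omega, by omega⟩
    · obtain ⟨x, hx, hxa⟩ := hS (v (4 * k))
      have h1 := hl _ _ hxa
      have h2 := hl _ _ hxa.symm
      rw [hv _ (by omega)] at h1 h2
      have := hmod x hx
      exact ⟨x, hx, by omega, by omega, by omega⟩
  have hsm := hmod s hs
  have hbase : 2 * k ≤ (S.filter (fun x => l x ≤ 4 * k)).card := by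
    rcases Nat.eq_zero_or_pos k with h | h
    · omega
    · have h1 := hup (k - 1) (by omega)
      refine le_trans (by omega) (h1.trans (Finset.card_le_card ?_))
      intro y; simp only [Finset.mem_filter]; rintro ⟨h, h'⟩; exact ⟨h, by omega⟩
  have hsub : insert s (insert t (insert x (S.filter (fun x => l x ≤ 4 * k)))) ⊆
      S.filter (fun x => l x ≤ 4 * k + 4) := by
    intro y hy
    simp only [Finset.mem_insert, Finset.mem_filter] at hy ⊢
    rcases hy with rfl | rfl | rfl | hy
    · exact ⟨hs, by omega⟩
    · exact ⟨ht, by omega⟩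
    · exact ⟨hx, by omega⟩
    · exact ⟨hy.1, by omega⟩
  have h1 := Finset.card_le_card hsub
  have hxt : t ≠ x := by rintro rfl; omega
  have hxs' : s ≠ x := by rintro rfl; omega
  rw [Finset.card_insert_of_notMem, Finset.card_insert_of_notMem,
    Finset.card_insert_of_notMem] at h1
  · have := hlow' k (by omega)
    omega
  · simp only [Finset.mem_filter]; omega
  · simp only [Finset.mem_insert, Finset.mem_filter, hxt, false_or]; omega
  · simp only [Finset.mem_insert, Finset.mem_filter, hxs', hne, false_or]; omega

theorem path_of_fun {W : Type*} (H : SimpleGraph W) (w : ℕ → W) (n : ℕ)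
    (ha : ∀ i < n, H.Adj (w i) (w (i + 1)))
    (hi : ∀ i ≤ n, ∀ j ≤ n, w i = w j → i = j) :
    ∃ p : H.Walk (w 0) (w n), p.IsPath ∧ (∀ x, x ∈ p.support ↔ ∃ i ≤ n, w i = x) ∧
      ∀ i < n, s(w i, w (i + 1)) ∈ p.edges := by
  induction n with
  | zero =>
    refine ⟨.nil, by simp, ?_, by simp⟩
    intro x
    simp [eq_comm]
  | succ n ih =>
    obtain ⟨p, h1, h2, h3⟩ := ih (fun i h => ha i (by omega))
      (fun i h j h' => hi i (by omega) j (by omega))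
    refine ⟨p.concat (ha n (by omega)), ?_, ?_, ?_⟩
    · apply h1.concat
      rw [h2]
      rintro ⟨i, hin, h⟩
      have := hi i (by omega) (n + 1) le_rfl h
      omega
    · intro x
      rw [Walk.support_concat]
      simp only [List.concat_eq_append, List.mem_append, h2, List.mem_singleton]
      constructor
      · rintro (⟨i, hin, h⟩ | rfl)
        · exact ⟨i, by omega, h⟩
        · exact ⟨n + 1, le_rfl, rfl⟩
      · rintro ⟨i, hin, h⟩
        rcases Nat.lt_or_ge n i with h' | h'
        · right; rw [← h]; congr 1; omega
        · left; exact ⟨i, h', h⟩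
    · intro i hin
      rw [Walk.edges_concat]
      simp only [List.concat_eq_append, List.mem_append, List.mem_singleton]
      rcases Nat.lt_or_ge i n with h' | h'
      · left; exact h3 i h'
      · right; obtain rfl : i = n := by omega
        rfl

theorem caterpillar_build (G : SimpleGraph V) (hc : G.Connected) (d : ℕ) (hd : 2 ≤ d)
    (l : V → ℕ) (p : ℕ → V) (f : V → ℕ)
    (hp : ∀ i ≤ d, l (p i) = i) (hpa : ∀ i < d, G.Adj (p i) (p (i + 1)))
    (hf1 : ∀ v, 1 ≤ f v) (hf2 : ∀ v, f v + 1 ≤ d) (hf : ∀ v, G.Adj (p (f v)) v)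
    (hdiam : G.diam = d) :
    ∃ T : SimpleGraph V, T ≤ G ∧ T.IsTree ∧ IsCaterpillar T ∧ T.diam = G.diam := by
  classical
  have hinj : ∀ i ≤ d, ∀ j ≤ d, p i = p j → i = j := by
    intro i hi j hj h
    rw [← hp i hi, ← hp j hj, h]
  let P : V → Prop := fun v => ∃ i ≤ d, p i = v
  have hPp : ∀ i ≤ d, P (p i) := fun i hi => ⟨i, hi, rfl⟩
  let R : V → V → Prop := fun u v =>
    (∃ i < d, u = p i ∧ v = p (i + 1)) ∨ (¬ P u ∧ v = p (f u))
  have hRG : ∀ u v, R u v → G.Adj u v := by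
    rintro u v (⟨i, hi, rfl, rfl⟩ | ⟨_, rfl⟩)
    · exact hpa i hi
    · exact (hf u).symm
  let T : SimpleGraph V :=
    { Adj := fun u v => R u v ∨ R v u
      symm := ⟨fun u v h => h.symm⟩
      loopless := ⟨fun u h => by
        rcases h with h | h <;> exact (hRG _ _ h).ne rfl⟩ }
  have hTR : ∀ u v, T.Adj u v ↔ (R u v ∨ R v u) := fun u v => Iff.rfl
  have hTG : T ≤ G := by
    intro u v h
    rcases h with h | h
    · exact hRG _ _ h
    · exact (hRG _ _ h).symm
  have hTp : ∀ i < d, T.Adj (p i) (p (i + 1)) := fun i hi => Or.inl (Or.inl ⟨i, hi, rfl, rfl⟩)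
  have hTf : ∀ v, ¬ P v → T.Adj v (p (f v)) := fun v hv => Or.inl (Or.inr ⟨hv, rfl⟩)
  have hreach : ∀ i ≤ d, T.Reachable (p 0) (p i) := by
    intro i
    induction i with
    | zero => intro _; exact Reachable.refl _
    | succ i ih => intro h; exact (ih (by omega)).trans (hTp i (by omega)).reachable
  have hconn : T.Connected := by
    rw [connected_iff_exists_forall_reachable]
    refine ⟨p 0, fun w => ?_⟩
    by_cases hw : P w
    · obtain ⟨i, hi, rfl⟩ := hw
      exact hreach i hi
    · exact (hreach (f w) (by have := hf2 w; omega)).trans (hTf w hw).symm.reachable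
  have htree : T.IsTree := by
    rw [isTree_iff_connected_and_card]
    refine ⟨hconn, le_antisymm ?_ hconn.card_vert_le_card_edgeSet_add_one⟩
    let par : V → V := fun v => if P v then p (l v - 1) else p (f v)
    let g : {v : V // v ≠ p 0} → Sym2 V := fun v => s(v.1, par v.1)
    have hsub : T.edgeSet ⊆ Set.range g := by
      intro e
      induction e with
      | _ u v =>
      intro he
      rw [mem_edgeSet] at he
      have aux : ∀ u v, R u v → s(u, v) ∈ Set.range g := by
        rintro u v (⟨i, hi, rfl, rfl⟩ | ⟨hu, rfl⟩)
        · refine ⟨⟨p (i + 1), fun h => ?_⟩, ?_⟩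
          · have := hinj _ (by omega) _ (by omega) h
            omega
          · simp only [g, par]
            rw [if_pos (hPp _ (by omega)), hp _ (by omega), Nat.add_sub_cancel, Sym2.eq_swap]
        · refine ⟨⟨u, fun h => hu (h ▸ hPp 0 (by omega))⟩, ?_⟩
          simp only [g, par]
          rw [if_neg hu]
      rcases he with h | h
      · exact aux _ _ h
      · rw [Sym2.eq_swap]; exact aux _ _ h
    have h1 : Nat.card T.edgeSet ≤ Nat.card (Set.range g) :=
      Nat.card_mono (Set.toFinite _) hsub
    have h2 : Nat.card (Set.range g) ≤ Nat.card {v : V // v ≠ p 0} := Finite.card_range_le g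
    have h3 : Nat.card {v : V // v ≠ p 0} + 1 = Nat.card V := by
      rw [Nat.card_eq_fintype_card, Nat.card_eq_fintype_card, Fintype.card_subtype_compl]
      have : 0 < Fintype.card V := Fintype.card_pos_iff.2 ⟨p 0⟩
      simp only [Fintype.card_subtype_eq]
      omega
    omega
  -- neighbours
  have hoff : ∀ v, ¬ P v → T.neighborSet v = {p (f v)} := by
    intro v hv
    ext w
    simp only [mem_neighborSet, Set.mem_singleton_iff]
    constructor
    · rintro ((⟨i, hi, rfl, rfl⟩ | ⟨_, rfl⟩) | (⟨i, hi, rfl, rfl⟩ | ⟨_, rfl⟩))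
      · exact absurd (hPp i (by omega)) hv
      · rfl
      · exact absurd (hPp _ (by omega)) hv
      · exact absurd (hPp _ (by have := hf2 w; omega)) hv
    · rintro rfl; exact hTf v hv
  have hfirst : T.neighborSet (p 0) = {p 1} := by
    ext w
    simp only [mem_neighborSet, Set.mem_singleton_iff]
    constructor
    · rintro ((⟨i, hi, h, rfl⟩ | ⟨h, rfl⟩) | (⟨i, hi, rfl, h⟩ | ⟨_, h⟩))
      · have := hinj _ (by omega) _ (by omega) h
        rw [← this]
      · exact absurd (hPp 0 (by omega)) h
      · have := hinj _ (by omega) _ (by omega) h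
        omega
      · have h2 := hf2 w
        have h1 := hf1 w
        have := hinj _ (by omega) _ (by omega) h
        omega
    · rintro rfl; exact hTp 0 (by omega)
  have hlast : T.neighborSet (p d) = {p (d - 1)} := by
    ext w
    simp only [mem_neighborSet, Set.mem_singleton_iff]
    constructor
    · rintro ((⟨i, hi, h, rfl⟩ | ⟨h, rfl⟩) | (⟨i, hi, rfl, h⟩ | ⟨_, h⟩))
      · have := hinj _ (by omega) _ (by omega) h
        omega
      · exact absurd (hPp d (by omega)) h
      · have := hinj _ (by omega) _ (by omega) h
        congr 1
        omega
      · have h2 := hf2 w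
        have h1 := hf1 w
        have := hinj _ (by omega) _ (by omega) h
        omega
    · rintro rfl
      have := hTp (d - 1) (by omega)
      rw [Nat.sub_add_cancel (by omega)] at this
      exact this.symm
  have hmid : ∀ i, i + 2 ≤ d → (T.neighborSet (p (i + 1))).ncard ≠ 1 := by
    intro i hi h
    rw [Set.ncard_eq_one] at h
    obtain ⟨a, ha⟩ := h
    have h1 : p i ∈ T.neighborSet (p (i + 1)) := (hTp i (by omega)).symm
    have h2 : p (i + 2) ∈ T.neighborSet (p (i + 1)) := hTp (i + 1) (by omega)
    rw [ha, Set.mem_singleton_iff] at h1 h2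
    have := hinj _ (by omega) _ (by omega) (h1.trans h2.symm)
    omega
  have hchar : ∀ v, (T.neighborSet v).ncard ≠ 1 → ∃ i, i + 2 ≤ d ∧ p (i + 1) = v := by
    intro v hv
    by_cases hP : P v
    · obtain ⟨i, hi, rfl⟩ := hP
      have h0 : i ≠ 0 := by
        rintro rfl
        rw [hfirst] at hv
        simp at hv
      have h1 : i ≠ d := by
        rintro rfl
        rw [hlast] at hv
        simp at hv
      exact ⟨i - 1, by omega, by congr 1; omega⟩
    · rw [hoff v hP] at hv
      simp at hv
  refine ⟨T, hTG, htree, ⟨htree, ?_⟩, ?_⟩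
  · let w : ℕ → {v : V | (T.neighborSet v).ncard ≠ 1} := fun i =>
      ⟨p (min i (d - 2) + 1), hmid _ (by omega)⟩
    have hw : ∀ i ≤ d - 2, (w i).1 = p (i + 1) := by
      intro i hi
      simp only [w]
      rw [min_eq_left hi]
    obtain ⟨q, h1, h2, h3⟩ := path_of_fun (T.induce {v : V | (T.neighborSet v).ncard ≠ 1}) w (d - 2)
      (by
        intro i hi
        rw [induce_adj, hw i (by omega), hw (i + 1) (by omega)]
        exact hTp _ (by omega))
      (by
        intro i hi j hj h
        have h := congrArg Subtype.val h
        rw [hw i hi, hw j hj] at h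
        have := hinj _ (by omega) _ (by omega) h
        omega)
    have hwsurj : ∀ x, ∃ i ≤ d - 2, w i = x := by
      intro x
      obtain ⟨i, hi, hx⟩ := hchar x.1 x.2
      exact ⟨i, by omega, Subtype.ext (by rw [hw i (by omega)]; exact hx)⟩
    refine ⟨_, _, q, h1, fun x => (h2 x).2 (hwsurj x), ?_⟩
    intro e
    induction e with
    | _ u v =>
    intro he
    rw [mem_edgeSet, induce_adj] at he
    have aux : ∀ u v : {v : V | (T.neighborSet v).ncard ≠ 1}, R u.1 v.1 → s(u, v) ∈ q.edges := by
      intro u v h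
      obtain ⟨i, hi, rfl⟩ := hwsurj u
      obtain ⟨j, hj, rfl⟩ := hwsurj v
      rw [hw i hi, hw j hj] at h
      rcases h with ⟨k, hk, ha, hb⟩ | ⟨h, _⟩
      · have e1 := hinj _ (by omega) _ (by omega) ha
        have e2 := hinj _ (by omega) _ (by omega) hb
        obtain rfl : j = i + 1 := by omega
        exact h3 i (by omega)
      · exact absurd (hPp _ (by omega)) h
    rcases he with h | h
    · exact aux _ _ h
    · rw [Sym2.eq_swap]; exact aux _ _ h
  · haveI : Nonempty V := ⟨p 0⟩
    apply le_antisymm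
    · rw [hdiam]
      have hdp : ∀ i k, i + k ≤ d → T.dist (p i) (p (i + k)) ≤ k := by
        intro i k
        induction k with
        | zero => intro _; simp
        | succ k ih =>
          intro h
          have h1 := ih (by omega)
          have h2 : T.dist (p (i + k)) (p (i + k + 1)) = 1 := dist_eq_one_iff_adj.2 (hTp _ (by omega))
          have h3 := hconn.dist_triangle (u := p i) (v := p (i + k)) (w := p (i + k + 1))
          rw [← add_assoc]
          omega
      have hex : ∀ u, ∃ i e, T.dist u (p i) ≤ e ∧ e ≤ i ∧ i + e ≤ d := by
        intro u
        by_cases hu : P u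
        · obtain ⟨i, hi, rfl⟩ := hu
          exact ⟨i, 0, by simp, by omega, by omega⟩
        · exact ⟨f u, 1, (dist_eq_one_iff_adj.2 (hTf u hu)).le, hf1 u, hf2 u⟩
      have hmain : ∀ u v i e i' e', T.dist u (p i) ≤ e → e ≤ i → i + e ≤ d →
          T.dist v (p i') ≤ e' → e' ≤ i' → i' + e' ≤ d → i ≤ i' → T.dist u v ≤ d := by
        intro u v i e i' e' h1 h2 h3 h4 h5 h6 h7
        have a1 := hconn.dist_triangle (u := u) (v := p i) (w := v)
        have a2 := hconn.dist_triangle (u := p i) (v := p i') (w := v)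
        have a3 := hdp i (i' - i) (by omega)
        rw [Nat.add_sub_cancel' h7] at a3
        rw [dist_comm (u := p i') (v := v)] at a2
        omega
      obtain ⟨u, v, huv⟩ := T.exists_dist_eq_diam
      rw [← huv]
      obtain ⟨i, e, h1, h2, h3⟩ := hex u
      obtain ⟨i', e', h4, h5, h6⟩ := hex v
      rcases le_total i i' with h | h
      · exact hmain u v i e i' e' h1 h2 h3 h4 h5 h6 h
      · rw [dist_comm]
        exact hmain v u i' e' i e h4 h5 h6 h1 h2 h3 h
    · exact diam_anti_of_ediam_ne_top hTG (connected_iff_ediam_ne_top.1 hconn)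

/-- If a nontrivial connected graph `G` satisfies `2 * γ_t(G) = diam(G) + 1`, then `G`
has a spanning tree which is a caterpillar of the same diameter as `G`. -/
theorem exists_spanning_caterpillar (G : SimpleGraph V)
    (hc : G.Connected) (hn : 1 < Fintype.card V)
    (h : 2 * totalDomNum G = G.diam + 1) :
    ∃ T : SimpleGraph V, T ≤ G ∧ T.IsTree ∧ IsCaterpillar T ∧ T.diam = G.diam := by
  classical
  haveI : Nonempty V := hc.nonempty
  obtain ⟨S, hS, hScard⟩ : ∃ S : Finset V, IsTotalDomSet G S ∧ S.card = totalDomNum G := by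
    have h1 : 0 < totalDomNum G := by omega
    exact Nat.sInf_mem (Nat.nonempty_of_pos_sInf h1)
  obtain ⟨a, b, hab⟩ := G.exists_dist_eq_diam
  obtain ⟨w, hw⟩ := hc.exists_walk_length_eq_dist a b
  set d := G.diam with hd
  let l : V → ℕ := fun x => G.dist a x
  have hl : ∀ u v, G.Adj u v → l u ≤ l v + 1 := by
    intro u v huv
    have h1 := hc.dist_triangle (u := a) (v := v) (w := u)
    have h2 : G.dist v u = 1 := dist_eq_one_iff_adj.2 huv.symm
    simp only [l]
    omega
  have hld : ∀ x, l x ≤ d := fun x => dist_le_diam (connected_iff_ediam_ne_top.1 hc)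
  let v : ℕ → V := w.getVert
  have hva : ∀ i < d, G.Adj (v i) (v (i + 1)) := fun i hi => w.adj_getVert_succ (by omega)
  have hv0 : l (v 0) = 0 := by simp [l, v]
  have hvd : l (v d) = d := by
    have : v d = b := by
      simp only [v]
      rw [← hab, ← hw, Walk.getVert_length]
    rw [this]; exact hab
  have hv1 : ∀ i ≤ d, l (v i) ≤ i := by
    intro i
    induction i with
    | zero => intro _; omega
    | succ i ih =>
      intro hi
      have := ih (by omega)
      have := hl _ _ (hva i (by omega)).symm
      omega
  have hv2 : ∀ k i, i + k = d → i ≤ l (v i) := by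
    intro k
    induction k with
    | zero => intro i hi; obtain rfl : i = d := by omega
              omega
    | succ k ih =>
      intro i hi
      have := ih (i + 1) (by omega)
      have := hl _ _ (hva i (by omega)).symm
      omega
  have hv : ∀ i ≤ d, l (v i) = i := fun i hi =>
    le_antisymm (hv1 i hi) (hv2 (d - i) i (by omega))
  obtain ⟨j, hj, hmod, huniq⟩ := core_levels G S hS l hl d v hv hld (by omega)
  let p : ℕ → V := fun i => if h : ∃ s ∈ S, l s = i then h.choose else v i
  have hps : ∀ s ∈ S, p (l s) = s := by
    intro s hs
    have hex : ∃ t ∈ S, l t = l s := ⟨s, hs, rfl⟩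
    simp only [p]
    rw [dif_pos hex]
    exact huniq _ hex.choose_spec.1 _ hs hex.choose_spec.2
  have hps' : ∀ s ∈ S, ∀ i, l s = i → p i = s := by
    rintro s hs i rfl
    exact hps s hs
  have hpv : ∀ i, i % 4 = 0 ∨ i % 4 = 3 → p i = v i := by
    intro i hi
    simp only [p]
    rw [dif_neg]
    rintro ⟨s, hs, rfl⟩
    have := hmod s hs
    omega
  have hp : ∀ i ≤ d, l (p i) = i := by
    intro i hi
    by_cases hex : ∃ s ∈ S, l s = i
    · obtain ⟨s, hs, rfl⟩ := hex
      rw [hps s hs]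
    · simp only [p]
      rw [dif_neg hex]
      exact hv i hi
  -- domination of the geodesic
  have hdom : ∀ i ≤ d, ∃ s ∈ S, G.Adj s (v i) ∧ l s ≤ i + 1 ∧ i ≤ l s + 1 := by
    intro i hi
    obtain ⟨s, hs, hsa⟩ := hS (v i)
    have h1 := hl _ _ hsa
    have h2 := hl _ _ hsa.symm
    rw [hv i hi] at h1 h2
    exact ⟨s, hs, hsa, h1, h2⟩
  have hpa : ∀ i < d, G.Adj (p i) (p (i + 1)) := by
    intro i hi
    have hcases : i % 4 = 0 ∨ i % 4 = 1 ∨ i % 4 = 2 ∨ i % 4 = 3 := by omega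
    rcases hcases with h4 | h4 | h4 | h4
    · obtain ⟨s, hs, hsa, h1, h2⟩ := hdom i (by omega)
      have := hmod s hs
      rw [hpv i (by omega), hps' s hs (i + 1) (by omega)]
      exact hsa.symm
    · obtain ⟨s, hs, hsa, h1, h2⟩ := hdom (i - 1) (by omega)
      have h3 := hmod s hs
      obtain ⟨t, ht, hta⟩ := hS s
      have h5 := hmod t ht
      have h6 := hl _ _ hta
      have h7 := hl _ _ hta.symm
      have h8 : l t ≠ l s := fun he => hta.ne (huniq _ ht _ hs he)
      rw [hps' s hs i (by omega), hps' t ht (i + 1) (by omega)]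
      exact hta.symm
    · obtain ⟨s, hs, hsa, h1, h2⟩ := hdom (i + 1) (by omega)
      have := hmod s hs
      rw [hpv (i + 1) (by omega), hps' s hs i (by omega)]
      exact hsa
    · rw [hpv i (by omega), hpv (i + 1) (by omega)]
      exact hva i hi
  choose g hgS hga using hS
  refine caterpillar_build G hc d (by omega) l p (fun x => l (g x)) hp hpa ?_ ?_ ?_ rfl
  · intro x
    have := hmod _ (hgS x)
    show 1 ≤ l (g x)
    omega
  · intro x
    have := hmod _ (hgS x)
    have := hld (g x)
    show l (g x) + 1 ≤ d
    omega
  · intro x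
    show G.Adj (p (l (g x))) x
    rw [hps _ (hgS x)]
    exact hga x
end

section
/- If G is a bipartite graph with no isolated vertices, then β_0(G) = Γ(G) = IR(G). -/
variable {V : Type*} [Fintype V] [DecidableEq V]

/-- `v` has a private neighbor with respect to `S`: some vertex of the closed
neighborhood of `v` lies outside the closed neighborhood of `S \ {v}`. -/
def HasPrivateNbr (G : SimpleGraph V) (S : Finset V) (v : V) : Prop :=
  ∃ w : V, (w = v ∨ G.Adj v w) ∧ ∀ u ∈ S, u ≠ v → ¬ (w = u ∨ G.Adj u w)

/-- `S` is irredundant: every vertex of `S` has a private neighbor. -/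
def IsIrredundant (G : SimpleGraph V) (S : Finset V) : Prop :=
  ∀ v ∈ S, HasPrivateNbr G S v

/-- `S` is a maximal irredundant set of `G`. -/
def IsMaximalIrredundant (G : SimpleGraph V) (S : Finset V) : Prop :=
  IsIrredundant G S ∧ ∀ T : Finset V, S ⊂ T → ¬ IsIrredundant G T

/-- The irredundance number: minimum cardinality of a maximal irredundant set. -/
noncomputable def irNum (G : SimpleGraph V) : ℕ :=
  sInf {n | ∃ S : Finset V, IsMaximalIrredundant G S ∧ S.card = n}

/-- The upper irredundance number: maximum cardinality of a maximal irredundant set. -/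
noncomputable def upperIrNum (G : SimpleGraph V) : ℕ :=
  sSup {n | ∃ S : Finset V, IsMaximalIrredundant G S ∧ S.card = n}

/-- `S` is an independent set of `G`. -/
def IsIndepSet (G : SimpleGraph V) (S : Finset V) : Prop :=
  ∀ u ∈ S, ∀ v ∈ S, ¬ G.Adj u v

/-- `S` is a maximal independent set of `G`. -/
def IsMaximalIndepSet (G : SimpleGraph V) (S : Finset V) : Prop :=
  IsIndepSet G S ∧ ∀ T : Finset V, S ⊂ T → ¬ IsIndepSet G T

/-- The independent domination number: minimum cardinality of a maximal independent set. -/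
noncomputable def indepDomNum (G : SimpleGraph V) : ℕ :=
  sInf {n | ∃ S : Finset V, IsMaximalIndepSet G S ∧ S.card = n}

/-- The independence number: maximum cardinality of an independent set. -/
noncomputable def indepNum (G : SimpleGraph V) : ℕ :=
  sSup {n | ∃ S : Finset V, IsIndepSet G S ∧ S.card = n}

/-- `S` is a minimal dominating set of `G`. -/
def IsMinimalDomSet (G : SimpleGraph V) (S : Finset V) : Prop :=
  IsDomSet G S ∧ ∀ T : Finset V, T ⊂ S → ¬ IsDomSet G T

/-- The upper domination number: maximum cardinality of a minimal dominating set. -/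
noncomputable def upperDomNum (G : SimpleGraph V) : ℕ :=
  sSup {n | ∃ S : Finset V, IsMinimalDomSet G S ∧ S.card = n}


lemma aux_indep_of_irred (G : SimpleGraph V) (hb : G.Colorable 2) (S : Finset V)
    (hS : IsIrredundant G S) : ∃ T : Finset V, IsIndepSet G T ∧ T.card = S.card := by
  classical
  obtain ⟨c⟩ := hb
  have hc : ∀ {a b}, G.Adj a b → c a ≠ c b := fun hab => c.valid hab
  have hS' : ∀ v : V, ∃ w : V, v ∈ S →
      ((w = v ∨ G.Adj v w) ∧ ∀ u ∈ S, u ≠ v → ¬ (w = u ∨ G.Adj u w)) := by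
    intro v
    by_cases hv : v ∈ S
    · obtain ⟨w, hw⟩ := hS v hv
      exact ⟨w, fun _ => hw⟩
    · exact ⟨v, fun h => absurd h hv⟩
  choose f hf using hS'
  let P : V → Prop := fun v => (∀ u ∈ S, ¬ G.Adj u v) ∨ c v = 0
  let g : V → V := fun v => if P v then v else f v
  have gp : ∀ v, P v → g v = v := fun v hv => if_pos hv
  have gn : ∀ v, ¬ P v → g v = f v := fun v hv => if_neg hv
  have fadj : ∀ v ∈ S, ¬ P v → G.Adj v (f v) ∧ c (f v) = 0 := by
    intro v hv hP
    simp only [P, not_or, not_forall, not_not] at hP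
    obtain ⟨⟨u, hu, huv⟩, h1⟩ := hP
    obtain ⟨h2, h3⟩ := hf v hv
    have h4 : G.Adj v (f v) := by
      rcases h2 with h2 | h2
      · exact absurd (Or.inr (h2.symm ▸ huv)) (h3 u hu huv.ne)
      · exact h2
    refine ⟨h4, ?_⟩
    have := hc h4
    omega
  refine ⟨S.image g, ?_, Finset.card_image_of_injOn ?_⟩
  · intro a ha b hb hab
    obtain ⟨u, hu, rfl⟩ := Finset.mem_image.1 ha
    obtain ⟨v, hv, rfl⟩ := Finset.mem_image.1 hb
    by_cases pu : P u <;> by_cases pv : P v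
    · rw [gp u pu, gp v pv] at hab
      rcases pu with pu | pu
      · exact pu v hv hab.symm
      rcases pv with pv | pv
      · exact pv u hu hab
      exact hc hab (pu.trans pv.symm)
    · rw [gp u pu, gn v pv] at hab
      exact (hf v hv).2 u hu (fun e => pv (e ▸ pu)) (Or.inr hab)
    · rw [gn u pu, gp v pv] at hab
      exact (hf u hu).2 v hv (fun e => pu (e ▸ pv)) (Or.inr hab.symm)
    · rw [gn u pu, gn v pv] at hab
      exact hc hab ((fadj u hu pu).2.trans (fadj v hv pv).2.symm)
  · intro u hu v hv huv
    by_contra hne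
    have hu' : u ∈ S := hu
    have hv' : v ∈ S := hv
    by_cases pu : P u <;> by_cases pv : P v
    · rw [gp u pu, gp v pv] at huv
      exact hne huv
    · rw [gp u pu, gn v pv] at huv
      exact (hf v hv').2 u hu' hne (Or.inl huv.symm)
    · rw [gn u pu, gp v pv] at huv
      exact (hf u hu').2 v hv' (Ne.symm hne) (Or.inl huv)
    · rw [gn u pu, gn v pv] at huv
      exact (hf v hv').2 u hu' hne (Or.inr (huv ▸ (fadj u hu' pu).1))

lemma aux_irred_of_minDom (G : SimpleGraph V) (S : Finset V)
    (hS : IsMinimalDomSet G S) : IsIrredundant G S := by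
  intro v hv
  have h1 := hS.2 _ (Finset.erase_ssubset hv)
  simp only [IsDomSet, not_forall, not_exists, not_and] at h1
  obtain ⟨w, hw, hn⟩ := h1
  have key : ∀ u ∈ S, u ≠ v → ¬ (w = u ∨ G.Adj u w) := by
    intro u hu huv h2
    have hm := Finset.mem_erase.2 ⟨huv, hu⟩
    rcases h2 with h2 | h2
    · exact hw (h2 ▸ hm)
    · exact hn u hm h2
  refine ⟨w, ?_, key⟩
  by_cases e : w = v
  · exact Or.inl e
  · right
    have hwS : w ∉ S := fun hh => hw (Finset.mem_erase.2 ⟨e, hh⟩)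
    obtain ⟨u, hu, huw⟩ := hS.1 w hwS
    by_cases e2 : u = v
    · exact e2 ▸ huw
    · exact absurd (Or.inr huw) (key u hu e2)

/-- For a bipartite graph `G` with no isolated vertices,
`β₀(G) = Γ(G) = IR(G)`. -/
theorem bipartite_upper_chain_eq (G : SimpleGraph V) (hb : G.Colorable 2)
    (h : ∀ v : V, ∃ u : V, G.Adj v u) :
    indepNum G = upperDomNum G ∧ upperDomNum G = upperIrNum G := by
  classical
  obtain ⟨M, hM, hmax⟩ := Finset.exists_max_image
    (Finset.univ.filter fun S : Finset V => IsIndepSet G S) Finset.card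
    ⟨∅, Finset.mem_filter.2 ⟨Finset.mem_univ _, fun u hu => absurd hu (Finset.notMem_empty u)⟩⟩
  have hM : IsIndepSet G M := (Finset.mem_filter.1 hM).2
  have hmax : ∀ T, IsIndepSet G T → T.card ≤ M.card :=
    fun T hT => hmax T (Finset.mem_filter.2 ⟨Finset.mem_univ _, hT⟩)
  have hirr : ∀ S, IsIrredundant G S → S.card ≤ M.card := by
    intro S hS
    obtain ⟨T, hT, e⟩ := aux_indep_of_irred G hb S hS
    exact e ▸ hmax T hT
  have hMdom : IsMinimalDomSet G M := by
    constructor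
    · intro v hv
      by_contra hcon
      push Not at hcon
      have : IsIndepSet G (insert v M) := by
        intro a ha b hb hab
        rcases Finset.mem_insert.1 ha with ea | ha2 <;>
          rcases Finset.mem_insert.1 hb with eb | hb2
        · exact hab.ne (ea.trans eb.symm)
        · exact hcon b hb2 (ea ▸ hab.symm)
        · exact hcon a ha2 (eb ▸ hab)
        · exact hM a ha2 b hb2 hab
      have := hmax _ this
      rw [Finset.card_insert_of_notMem hv] at this
      omega
    · intro T hT hd
      obtain ⟨v, hv, hvT⟩ := Finset.exists_of_ssubset hT
      obtain ⟨u, hu, huv⟩ := hd v hvT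
      exact hM u (hT.1 hu) v hv huv
  have hMir : IsMaximalIrredundant G M :=
    ⟨aux_irred_of_minDom G M hMdom, fun T hT hi =>
      absurd (hirr T hi) (not_le.2 (Finset.card_lt_card hT))⟩
  have e1 : indepNum G = M.card := by
    refine IsGreatest.csSup_eq ⟨⟨M, hM, rfl⟩, ?_⟩
    rintro n ⟨S, hS, rfl⟩
    exact hmax S hS
  have e2 : upperDomNum G = M.card := by
    refine IsGreatest.csSup_eq ⟨⟨M, hMdom, rfl⟩, ?_⟩
    rintro n ⟨S, hS, rfl⟩
    exact hirr S (aux_irred_of_minDom G S hS)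
  have e3 : upperIrNum G = M.card := by
    refine IsGreatest.csSup_eq ⟨⟨M, hMir, rfl⟩, ?_⟩
    rintro n ⟨S, hS, rfl⟩
    exact hirr S hS.1
  exact ⟨e1.trans e2.symm, e2.trans e3.symm⟩
end

section
/- Let G be a connected graph and let S be a maximal isolate set of G of minimum cardinality (an i_0-set) such that the induced subgraph G[S] has at least two isolated vertices and S ≠ V(G). Then G has a total dominating set of cardinality |S|, and hence γ_t(G) ≤ i_0(G). -/
variable {V : Type*} [Fintype V] [DecidableEq V]

/-- If `S` is an `i₀`-set of a connected graph `G` such that `G[S]` has at least two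
isolated vertices and `S ≠ V(G)`, then `G` has a total dominating set of cardinality
`|S|`, and hence `γ_t(G) ≤ i₀(G)`. -/
theorem totalDomNum_le_isolateNum_of_two_isolates (G : SimpleGraph V)
    (hc : G.Connected) (S : Finset V)
    (hS : IsMaximalIsolateSet G S) (hcard : S.card = isolateNum G)
    (h2 : ∃ u ∈ S, ∃ v ∈ S, u ≠ v ∧ (∀ w ∈ S, ¬ G.Adj u w) ∧ (∀ w ∈ S, ¬ G.Adj v w))
    (hne : S ≠ Finset.univ) :
    (∃ D : Finset V, IsTotalDomSet G D ∧ D.card = S.card) ∧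
      totalDomNum G ≤ isolateNum G := by
  obtain ⟨x, hx, y, hy, hxy, hxi, hyi⟩ := h2
  have key : ∀ n, n ∉ S → ∀ z ∈ S, (∀ w ∈ S, ¬ G.Adj z w) → G.Adj n z := by
    intro n hn z hz hzi
    by_contra hadj
    refine hS.2 (insert n S) (Finset.ssubset_insert hn) ⟨z, Finset.mem_insert_of_mem hz, ?_⟩
    intro u hu
    rcases Finset.mem_insert.1 hu with rfl | hu
    · exact fun h => hadj h.symm
    · exact hzi u hu
  obtain ⟨n, hn⟩ : ∃ n, n ∉ S := by
    by_contra! h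
    exact hne (Finset.eq_univ_iff_forall.2 h)
  have hD : ∃ D : Finset V, IsTotalDomSet G D ∧ D.card = S.card := by
    refine ⟨insert n (S.erase y), ?_, ?_⟩
    · intro v
      by_cases hv : v ∈ S
      · by_cases hvi : ∀ w ∈ S, ¬ G.Adj v w
        · exact ⟨n, Finset.mem_insert_self _ _, key n hn v hv hvi⟩
        · push Not at hvi
          obtain ⟨w, hw, hvw⟩ := hvi
          refine ⟨w, Finset.mem_insert_of_mem (Finset.mem_erase.2 ⟨?_, hw⟩), hvw.symm⟩
          rintro rfl
          exact hyi v hv hvw.symm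
      · exact ⟨x, Finset.mem_insert_of_mem (Finset.mem_erase.2 ⟨hxy, hx⟩),
          (key v hv x hx hxi).symm⟩
    · rw [Finset.card_insert_of_notMem (fun h => hn (Finset.mem_of_mem_erase h)),
        Finset.card_erase_add_one hy]
  refine ⟨hD, ?_⟩
  rw [← hcard]
  exact Nat.sInf_le hD
end

section
/- Let G be a connected graph with diam(G) ≥ 3 and let S be a maximal isolate set of G. Then every diametral path of G (a shortest path between two vertices at distance diam(G)) contains at least one vertex of S. -/
variable {V : Type*} [Fintype V] [DecidableEq V]

/-- If `G` is a connected graph with `diam(G) ≥ 3` and `S` is a maximal isolate set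
of `G`, then every diametral path of `G` contains a vertex of `S`. -/
theorem diametral_path_meets_maximal_isolate_set (G : SimpleGraph V)
    (hc : G.Connected) (hdiam : 3 ≤ G.diam)
    (S : Finset V) (hS : IsMaximalIsolateSet G S)
    (u v : V) (p : G.Walk u v) (hp : p.IsPath)
    (hshortest : p.length = G.dist u v) (hdiametral : G.dist u v = G.diam) :
    ∃ w ∈ p.support, w ∈ S := by
  obtain ⟨⟨x, hx, hiso⟩, hmax⟩ := hS
  have key : ∀ w, w ∉ S → G.Adj x w := by
    intro w hw
    by_contra hn
    refine hmax (insert w S) (Finset.ssubset_insert hw) ⟨x, Finset.mem_insert_of_mem hx, ?_⟩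
    intro y hy
    rcases Finset.mem_insert.1 hy with rfl | hy
    · exact hn
    · exact hiso y hy
  by_contra! hcon
  have hu := key u (hcon u p.start_mem_support)
  have hv := key v (hcon v p.end_mem_support)
  have h := SimpleGraph.dist_le (SimpleGraph.Walk.cons hu.symm (SimpleGraph.Walk.cons hv .nil))
  simp only [SimpleGraph.Walk.length_cons, SimpleGraph.Walk.length_nil] at h
  omega
end
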